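/- Let α, β : I_M → Y be loops in a digital image Y ⊆ ℤⁿ based at y₀ (α(0) = α(M) = y₀ = β(0) = β(M)), let k ≥ 1, and let α̂, β̂ : I_L → S(Y, 2k+1), L = (2k+1)M+2k, be their standard covers. Then α̂ and β̂ are loops of length L in S(Y, 2k+1) based at ȳ₀ = (2k+1)y₀ + (k,…,k), and if α and β are homotopic via a based homotopy of based loops, then α̂ and β̂ are homotopic via a based homotopy of based loops. -/

import Mathlib

open Set

/-- Adjacency of points in `ℤⁿ`: all coordinates differ by at most 1. -/
def adj {n : ℕ} (x y : Fin n → ℤ) : Prop := ∀ i, |x i - y i| ≤ 1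

/-- The `k`-subdivision of a digital image `X ⊆ ℤⁿ`. -/
def Subdiv {n : ℕ} (X : Set (Fin n → ℤ)) (k : ℤ) : Set (Fin n → ℤ) :=
  { y | (fun i => (y i).fdiv k) ∈ X }

/-- The standard projection `ρ_k`, coordinatewise floor-division by `k`. -/
def rho {n : ℕ} (k : ℤ) (y : Fin n → ℤ) : Fin n → ℤ := fun i => (y i).fdiv k

/-- The centre `ī = (2k+1)i + k` of `S(i, 2k+1) ⊆ ℤ`. -/
def bar (k i : ℤ) : ℤ := (2 * k + 1) * i + k

/-- The centre `ȳ = (2k+1)y + (k,…,k)` of `S(y, 2k+1) ⊆ ℤⁿ`. -/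
def barPt {n : ℕ} (k : ℤ) (y : Fin n → ℤ) : Fin n → ℤ := fun i => (2 * k + 1) * y i + k

/-- The standard cover `α̂ : I_{(2k+1)N+2k} → ℤⁿ` of a path `α : I_N → Y ⊆ ℤⁿ`,
with respect to the odd subdivision factor `2k+1`:
`α̂(j) = \overline{α(0)}` for `0 ≤ j ≤ k-1`;
`α̂(ī + t) = \overline{α(i)} + t (α(i+1) - α(i))` for `0 ≤ i ≤ N-1`, `0 ≤ t ≤ 2k`
(here `j = ī + t` has `i = (j-k) div (2k+1)` and `t = (j-k) mod (2k+1)`);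
`α̂(j) = \overline{α(N)}` for `(2k+1)N + k ≤ j`. -/
def cover {n : ℕ} (k N : ℤ) (α : ℤ → Fin n → ℤ) (j : ℤ) : Fin n → ℤ :=
  if j ≤ k - 1 then barPt k (α 0)
  else if (2 * k + 1) * N + k ≤ j then barPt k (α N)
  else fun i =>
    barPt k (α ((j - k).fdiv (2 * k + 1))) i
      + ((j - k) % (2 * k + 1)) *
          (α ((j - k).fdiv (2 * k + 1) + 1) i - α ((j - k).fdiv (2 * k + 1)) i)


/-- `BasedLoopHomotopic M Y y₀ f g`: loops `f, g : I_M → Y` based at `y₀` are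
homotopic via a based homotopy of based loops. -/
def BasedLoopHomotopic {n : ℕ} (M : ℤ) (Y : Set (Fin n → ℤ)) (y₀ : Fin n → ℤ)
    (f g : ℤ → Fin n → ℤ) : Prop :=
  ∃ N : ℤ, 1 ≤ N ∧ ∃ H : ℤ → ℤ → Fin n → ℤ,
    (∀ x ∈ Icc (0 : ℤ) M, ∀ t ∈ Icc (0 : ℤ) N, H x t ∈ Y) ∧
    (∀ x ∈ Icc (0 : ℤ) M, ∀ t ∈ Icc (0 : ℤ) N,
      ∀ x' ∈ Icc (0 : ℤ) M, ∀ t' ∈ Icc (0 : ℤ) N,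
      |x - x'| ≤ 1 → |t - t'| ≤ 1 → adj (H x t) (H x' t')) ∧
    (∀ x ∈ Icc (0 : ℤ) M, H x 0 = f x) ∧
    (∀ x ∈ Icc (0 : ℤ) M, H x N = g x) ∧
    (∀ t ∈ Icc (0 : ℤ) N, H 0 t = y₀) ∧
    (∀ t ∈ Icc (0 : ℤ) N, H M t = y₀)

/-!
A based homotopy extends to a continuous map of the whole grid `ℤ²`, by retracting `ℤ` onto the
parameter intervals, so it suffices to cover a continuous map `G : ℤ² → ℤⁿ` by a continuous map
that restricts to standard covers of rows. This is done one cell of `ℤ²` and one coordinate at a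
time: the values of a coordinate of `G` at the vertices of a cell lie in some `{m, m + 1}`, and
the subdivided cell is mapped to heights between the centres of `m` and `m + 1`. Iterated linear
interpolation is not integral. With `K = 2k + 1` and `u` the centre of `m`, the lattice
polynomial `max (min A (u + K - t)) (max (min B (u + t)) (min A B))` in its place is integral,
nonexpansive in `(t, A, B)` jointly, and linear along the edges of the cell, so that
neighbouring cells agree on their common edge. It also lies over the value at the nearest
vertex, in all coordinates simultaneously, which keeps the cover inside the subdivision.
-/

section Interpolation

variable {K k m a b c d s t s' t' u A B A' B' : ℤ}

/-- Lattice interpolation from `A` at time `t = 0` to `B` at time `t = K`, for heights `A` and `B`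
between `u` and `u + K`. It is a substitute for linear interpolation which has integer values and is
nonexpansive in all of `t`, `A`, `B`. -/
def latticeInterp (K u t A B : ℤ) : ℤ :=
  max (min A (u + K - t)) (max (min B (u + t)) (min A B))

lemma latticeInterp_self : latticeInterp K u t A A = A := by
  unfold latticeInterp; omega

lemma latticeInterp_zero (hA : A ∈ Icc u (u + K)) : latticeInterp K u 0 A B = A := by
  obtain ⟨_, _⟩ := hA
  unfold latticeInterp; omega

lemma latticeInterp_sub_swap : latticeInterp K u (K - t) B A = latticeInterp K u t A B := by
  unfold latticeInterp; omega

lemma latticeInterp_mem_Icc {l r : ℤ} (hA : A ∈ Icc l r) (hB : B ∈ Icc l r) :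
    latticeInterp K u t A B ∈ Icc l r := by
  obtain ⟨_, _⟩ := hA
  obtain ⟨_, _⟩ := hB
  unfold latticeInterp; constructor <;> omega

lemma abs_latticeInterp_sub_latticeInterp_le {δ : ℤ} (ht : |t - t'| ≤ δ) (hA : |A - A'| ≤ δ)
    (hB : |B - B'| ≤ δ) : |latticeInterp K u t A B - latticeInterp K u t' A' B'| ≤ δ := by
  rw [abs_le] at *
  unfold latticeInterp; omega

lemma center_mem_Icc (hK : 0 ≤ K) (ha : a ∈ Icc m (m + 1)) :
    K * a + k ∈ Icc (K * m + k) (K * m + k + K) := by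
  obtain ⟨_, _⟩ := ha
  constructor <;> nlinarith

lemma latticeInterp_centers (ha : a ∈ Icc m (m + 1)) (hb : b ∈ Icc m (m + 1)) (ht : t ∈ Icc 0 K) :
    latticeInterp K (K * m + k) t (K * a + k) (K * b + k) = K * a + k + t * (b - a) := by
  have cases_of_mem {x : ℤ} (hx : x ∈ Icc m (m + 1)) : x = m ∨ x = m + 1 := by
    obtain ⟨_, _⟩ := hx; omega
  obtain ⟨_, _⟩ := ht
  unfold latticeInterp
  rcases cases_of_mem ha with rfl | rfl <;> rcases cases_of_mem hb with rfl | rfl <;>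
    ring_nf <;> omega

lemma latticeInterp_ediv_of_le (hk : 0 ≤ k) (ht : t ≤ k)
    (hA : A ∈ Icc ((2 * k + 1) * m + k) ((2 * k + 1) * m + k + (2 * k + 1)))
    (hB : B ∈ Icc ((2 * k + 1) * m + k) ((2 * k + 1) * m + k + (2 * k + 1))) :
    latticeInterp (2 * k + 1) ((2 * k + 1) * m + k) t A B / (2 * k + 1) = A / (2 * k + 1) := by
  have hK : 0 < 2 * k + 1 := by omega
  obtain ⟨hlo, hhi⟩ := latticeInterp_mem_Icc (K := 2 * k + 1) (u := (2 * k + 1) * m + k) (t := t)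
    hA hB
  obtain ⟨_, _⟩ := hA
  rcases le_or_gt A ((2 * k + 1) * m + k + k) with hAm | hAm
  · have hle : latticeInterp (2 * k + 1) ((2 * k + 1) * m + k) t A B ≤ (2 * k + 1) * m + k + k := by
      unfold latticeInterp; omega
    rw [(Int.ediv_eq_iff_of_pos (y := m) hK).2 (by constructor <;> linarith),
      (Int.ediv_eq_iff_of_pos (y := m) hK).2 (by constructor <;> linarith)]
  · have hlt : (2 * k + 1) * m + k + k < latticeInterp (2 * k + 1) ((2 * k + 1) * m + k) t A B := by
      unfold latticeInterp; omega
    rw [(Int.ediv_eq_iff_of_pos (y := m + 1) hK).2 (by constructor <;> linarith),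
      (Int.ediv_eq_iff_of_pos (y := m + 1) hK).2 (by constructor <;> linarith)]

lemma latticeInterp_ediv_of_gt (hk : 0 ≤ k) (ht : k < t)
    (hA : A ∈ Icc ((2 * k + 1) * m + k) ((2 * k + 1) * m + k + (2 * k + 1)))
    (hB : B ∈ Icc ((2 * k + 1) * m + k) ((2 * k + 1) * m + k + (2 * k + 1))) :
    latticeInterp (2 * k + 1) ((2 * k + 1) * m + k) t A B / (2 * k + 1) = B / (2 * k + 1) := by
  rw [← latticeInterp_sub_swap, latticeInterp_ediv_of_le hk (by omega) hB hA]

lemma center_ediv (hk : 0 ≤ k) : ((2 * k + 1) * a + k) / (2 * k + 1) = a := by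
  rw [Int.ediv_eq_iff_of_pos (by omega)]
  constructor <;> linarith

/-- The height over the point `(s, t)` of the cell `[0, 2k + 1]²`, obtained by lattice interpolation
first in `s` and then in `t`, when the values `a, b, c, d ∈ {m, m + 1}` stand at the vertices
`(0, 0), (2k + 1, 0), (0, 2k + 1), (2k + 1, 2k + 1)`. -/
def cellInterp (k m a b c d s t : ℤ) : ℤ :=
  latticeInterp (2 * k + 1) ((2 * k + 1) * m + k) t
    (latticeInterp (2 * k + 1) ((2 * k + 1) * m + k) s ((2 * k + 1) * a + k) ((2 * k + 1) * b + k))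
    (latticeInterp (2 * k + 1) ((2 * k + 1) * m + k) s ((2 * k + 1) * c + k) ((2 * k + 1) * d + k))

lemma cellInterp_swap_left_right :
    cellInterp k m b a d c (2 * k + 1 - s) t = cellInterp k m a b c d s t := by
  unfold cellInterp
  rw [latticeInterp_sub_swap, latticeInterp_sub_swap]

lemma cellInterp_swap_bottom_top :
    cellInterp k m c d a b s (2 * k + 1 - t) = cellInterp k m a b c d s t :=
  latticeInterp_sub_swap

lemma cellInterp_same_rows (ha : a ∈ Icc m (m + 1)) (hb : b ∈ Icc m (m + 1))
    (hs : s ∈ Icc 0 (2 * k + 1)) :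
    cellInterp k m a b a b s t = (2 * k + 1) * a + k + s * (b - a) :=
  latticeInterp_self.trans (latticeInterp_centers ha hb hs)

lemma cellInterp_bottom (hk : 0 ≤ k) (ha : a ∈ Icc m (m + 1)) (hb : b ∈ Icc m (m + 1))
    (hs : s ∈ Icc 0 (2 * k + 1)) :
    cellInterp k m a b c d s 0 = (2 * k + 1) * a + k + s * (b - a) := by
  have hK : 0 ≤ 2 * k + 1 := by omega
  rw [← latticeInterp_centers ha hb hs]
  exact latticeInterp_zero (latticeInterp_mem_Icc (center_mem_Icc hK ha) (center_mem_Icc hK hb))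

lemma cellInterp_top (hk : 0 ≤ k) (hc : c ∈ Icc m (m + 1)) (hd : d ∈ Icc m (m + 1))
    (hs : s ∈ Icc 0 (2 * k + 1)) :
    cellInterp k m a b c d s (2 * k + 1) = (2 * k + 1) * c + k + s * (d - c) := by
  rw [← cellInterp_swap_bottom_top, sub_self, cellInterp_bottom hk hc hd hs]

lemma cellInterp_left (hk : 0 ≤ k) (ha : a ∈ Icc m (m + 1)) (hc : c ∈ Icc m (m + 1))
    (ht : t ∈ Icc 0 (2 * k + 1)) :
    cellInterp k m a b c d 0 t = (2 * k + 1) * a + k + t * (c - a) := by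
  have hK : 0 ≤ 2 * k + 1 := by omega
  unfold cellInterp
  rw [latticeInterp_zero (center_mem_Icc hK ha), latticeInterp_zero (center_mem_Icc hK hc),
    latticeInterp_centers ha hc ht]

lemma cellInterp_right (hk : 0 ≤ k) (hb : b ∈ Icc m (m + 1)) (hd : d ∈ Icc m (m + 1))
    (ht : t ∈ Icc 0 (2 * k + 1)) :
    cellInterp k m a b c d (2 * k + 1) t = (2 * k + 1) * b + k + t * (d - b) := by
  rw [← cellInterp_swap_left_right, sub_self, cellInterp_left hk hb hd ht]

lemma abs_cellInterp_sub_cellInterp_le_one (hs : |s - s'| ≤ 1) (ht : |t - t'| ≤ 1) :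
    |cellInterp k m a b c d s t - cellInterp k m a b c d s' t'| ≤ 1 := by
  refine abs_latticeInterp_sub_latticeInterp_le ht ?_ ?_ <;>
    exact abs_latticeInterp_sub_latticeInterp_le hs (by simp) (by simp)

lemma cellInterp_ediv (hk : 0 ≤ k) (ha : a ∈ Icc m (m + 1)) (hb : b ∈ Icc m (m + 1))
    (hc : c ∈ Icc m (m + 1)) (hd : d ∈ Icc m (m + 1)) :
    cellInterp k m a b c d s t / (2 * k + 1)
      = if t ≤ k then (if s ≤ k then a else b) else (if s ≤ k then c else d) := by
  have hK : 0 ≤ 2 * k + 1 := by omega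
  have row_ediv {x y : ℤ} (hx : x ∈ Icc m (m + 1)) (hy : y ∈ Icc m (m + 1)) :
      latticeInterp (2 * k + 1) ((2 * k + 1) * m + k) s ((2 * k + 1) * x + k)
        ((2 * k + 1) * y + k) / (2 * k + 1) = if s ≤ k then x else y := by
    split_ifs with hs
    · rw [latticeInterp_ediv_of_le hk hs (center_mem_Icc hK hx) (center_mem_Icc hK hy),
        center_ediv hk]
    · rw [latticeInterp_ediv_of_gt hk (not_le.1 hs) (center_mem_Icc hK hx) (center_mem_Icc hK hy),
        center_ediv hk]
  have hbottom := latticeInterp_mem_Icc (K := 2 * k + 1) (u := (2 * k + 1) * m + k) (t := s)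
    (center_mem_Icc (k := k) hK ha) (center_mem_Icc hK hb)
  have htop := latticeInterp_mem_Icc (K := 2 * k + 1) (u := (2 * k + 1) * m + k) (t := s)
    (center_mem_Icc (k := k) hK hc) (center_mem_Icc hK hd)
  rw [cellInterp]
  rcases le_or_gt t k with ht | ht
  · rw [if_pos ht, latticeInterp_ediv_of_le hk ht hbottom htop, row_ediv ha hb]
  · rw [if_neg ht.not_ge, latticeInterp_ediv_of_gt hk ht hbottom htop, row_ediv hc hd]

end Interpolation

section GridCover

variable {n : ℕ} {k : ℤ} {G : ℤ → ℤ → Fin n → ℤ}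

/-- Digital continuity of a map defined on the whole grid `ℤ²`, given in curried form. -/
def GridContinuous (G : ℤ → ℤ → Fin n → ℤ) : Prop :=
  ∀ ⦃i i' j j' : ℤ⦄, |i - i'| ≤ 1 → |j - j'| ≤ 1 → adj (G i j) (G i' j')

/-- The least value of the coordinate `c` of `G` at the vertices of the cell with lower left
vertex `(q, r)`: the base height for interpolating `c` there. -/
def cellMin (G : ℤ → ℤ → Fin n → ℤ) (q r : ℤ) (c : Fin n) : ℤ :=
  min (min (G q r c) (G (q + 1) r c)) (min (G q (r + 1) c) (G (q + 1) (r + 1) c))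

lemma GridContinuous.mem_Icc_cellMin (hG : GridContinuous G) {q r i j : ℤ} (hi : i = q ∨ i = q + 1)
    (hj : j = r ∨ j = r + 1) (c : Fin n) :
    G i j c ∈ Icc (cellMin G q r c) (cellMin G q r c + 1) := by
  have close {i' j' : ℤ} (hi' : i' = q ∨ i' = q + 1) (hj' : j' = r ∨ j' = r + 1) :
      |G i j c - G i' j' c| ≤ 1 :=
    hG (by rw [abs_le]; omega) (by rw [abs_le]; omega) c
  have h₀₀ := abs_le.1 (close (.inl rfl) (.inl rfl))
  have h₁₀ := abs_le.1 (close (.inr rfl) (.inl rfl))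
  have h₀₁ := abs_le.1 (close (.inl rfl) (.inr rfl))
  have h₁₁ := abs_le.1 (close (.inr rfl) (.inr rfl))
  unfold cellMin
  refine ⟨?_, by omega⟩
  rcases hi with rfl | rfl <;> rcases hj with rfl | rfl <;> omega

/-- The map `[0, 2k + 1]² → ℤⁿ` covering `G` on the cell with lower left vertex `(q, r)`. -/
def cellCover (k : ℤ) (G : ℤ → ℤ → Fin n → ℤ) (q r s t : ℤ) : Fin n → ℤ := fun c =>
  cellInterp k (cellMin G q r c) (G q r c) (G (q + 1) r c) (G q (r + 1) c) (G (q + 1) (r + 1) c) s t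

/-- The two-dimensional analogue of the standard cover, for a map `G` on the grid `ℤ²`: the point
`((2k + 1)q + k + s, (2k + 1)r + k + t)` with `0 ≤ s, t ≤ 2k` is treated by the cell `(q, r)`. -/
def gridCover (k : ℤ) (G : ℤ → ℤ → Fin n → ℤ) (x y : ℤ) : Fin n → ℤ :=
  cellCover k G ((x - k) / (2 * k + 1)) ((y - k) / (2 * k + 1))
    ((x - k) % (2 * k + 1)) ((y - k) % (2 * k + 1))

lemma cellCover_succ_zero_left (hk : 0 ≤ k) (hG : GridContinuous G) {q r t : ℤ}
    (ht : t ∈ Icc 0 (2 * k + 1)) :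
    cellCover k G (q + 1) r 0 t = cellCover k G q r (2 * k + 1) t := by
  funext c
  unfold cellCover
  rw [cellInterp_left hk (hG.mem_Icc_cellMin (.inl rfl) (.inl rfl) c)
      (hG.mem_Icc_cellMin (.inl rfl) (.inr rfl) c) ht,
    cellInterp_right hk (hG.mem_Icc_cellMin (.inr rfl) (.inl rfl) c)
      (hG.mem_Icc_cellMin (.inr rfl) (.inr rfl) c) ht]

lemma cellCover_succ_zero_bottom (hk : 0 ≤ k) (hG : GridContinuous G) {q r s : ℤ}
    (hs : s ∈ Icc 0 (2 * k + 1)) :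
    cellCover k G q (r + 1) s 0 = cellCover k G q r s (2 * k + 1) := by
  funext c
  unfold cellCover
  rw [cellInterp_bottom hk (hG.mem_Icc_cellMin (.inl rfl) (.inl rfl) c)
      (hG.mem_Icc_cellMin (.inr rfl) (.inl rfl) c) hs,
    cellInterp_top hk (hG.mem_Icc_cellMin (.inl rfl) (.inr rfl) c)
      (hG.mem_Icc_cellMin (.inr rfl) (.inr rfl) c) hs]

lemma cell_ediv_emod_cases {K q s : ℤ} (hs : s ∈ Icc 0 K) (hK : 0 < K) :
    s < K ∧ (K * q + k + s - k) / K = q ∧ (K * q + k + s - k) % K = s ∨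
      s = K ∧ (K * q + k + s - k) / K = q + 1 ∧ (K * q + k + s - k) % K = 0 := by
  rcases hs.2.lt_or_eq with hlt | rfl
  · exact .inl ⟨hlt, (Int.ediv_emod_unique hK).2 ⟨by ring, hs.1, hlt⟩⟩
  · exact .inr ⟨rfl, (Int.ediv_emod_unique hK).2 ⟨by ring, le_rfl, hK⟩⟩

lemma gridCover_eq_cellCover (hk : 0 ≤ k) (hG : GridContinuous G) {q r s t : ℤ}
    (hs : s ∈ Icc 0 (2 * k + 1)) (ht : t ∈ Icc 0 (2 * k + 1)) :
    gridCover k G ((2 * k + 1) * q + k + s) ((2 * k + 1) * r + k + t) = cellCover k G q r s t := by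
  have hK : 0 < 2 * k + 1 := by omega
  have h0 : (0 : ℤ) ∈ Icc 0 (2 * k + 1) := ⟨le_rfl, hK.le⟩
  unfold gridCover
  rcases cell_ediv_emod_cases (k := k) (q := q) hs hK with ⟨-, hq, hs'⟩ | ⟨rfl, hq, hs'⟩ <;>
    rcases cell_ediv_emod_cases (k := k) (q := r) ht hK with ⟨-, hr, ht'⟩ | ⟨rfl, hr, ht'⟩ <;>
    rw [hq, hs', hr, ht']
  · rw [cellCover_succ_zero_bottom hk hG hs]
  · rw [cellCover_succ_zero_left hk hG ht]
  · rw [cellCover_succ_zero_left hk hG h0, cellCover_succ_zero_bottom hk hG hs]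

lemma exists_common_cell {K x x' : ℤ} (k : ℤ) (hK : 0 < K) (h : |x - x'| ≤ 1) :
    ∃ q, ∃ s ∈ Icc 0 K, ∃ s' ∈ Icc 0 K, x = K * q + k + s ∧ x' = K * q + k + s' := by
  have hdiv := Int.mul_ediv_add_emod (min x x' - k) K
  have hnonneg := Int.emod_nonneg (min x x' - k) hK.ne'
  have hlt := Int.emod_lt_of_pos (min x x' - k) hK
  rw [abs_le] at h
  set q := (min x x' - k) / K
  exact ⟨q, x - k - K * q, ⟨by omega, by omega⟩, x' - k - K * q, ⟨by omega, by omega⟩,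
    by ring, by ring⟩

lemma exists_cell {K : ℤ} (k : ℤ) (hK : 0 < K) (x : ℤ) :
    ∃ q, ∃ s ∈ Icc 0 K, x = K * q + k + s := by
  obtain ⟨q, s, hs, -, -, hx, -⟩ := exists_common_cell k hK (x := x) (x' := x) (by simp)
  exact ⟨q, s, hs, hx⟩

lemma gridContinuous_gridCover (hk : 0 ≤ k) (hG : GridContinuous G) :
    GridContinuous (gridCover k G) := by
  intro x x' y y' hx hy c
  have hK : 0 < 2 * k + 1 := by omega
  obtain ⟨q, s, hs, s', hs', rfl, rfl⟩ := exists_common_cell k hK hx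
  obtain ⟨r, t, ht, t', ht', rfl, rfl⟩ := exists_common_cell k hK hy
  rw [gridCover_eq_cellCover hk hG hs ht, gridCover_eq_cellCover hk hG hs' ht']
  exact abs_cellInterp_sub_cellInterp_le_one (by simpa using hx) (by simpa using hy)

lemma cell_ediv {q s : ℤ} (hs : s ∈ Icc 0 (2 * k + 1)) (hk : 0 ≤ k) :
    ((2 * k + 1) * q + k + s) / (2 * k + 1) = if s ≤ k then q else q + 1 := by
  obtain ⟨_, _⟩ := hs
  rw [Int.ediv_eq_iff_of_pos (by omega)]
  split_ifs <;> constructor <;> linarith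

lemma rho_gridCover (hk : 0 ≤ k) (hG : GridContinuous G) (x y : ℤ) :
    rho (2 * k + 1) (gridCover k G x y) = G (x / (2 * k + 1)) (y / (2 * k + 1)) := by
  have hK : 0 < 2 * k + 1 := by omega
  obtain ⟨q, s, hs, rfl⟩ := exists_cell k hK x
  obtain ⟨r, t, ht, rfl⟩ := exists_cell k hK y
  funext c
  rw [rho, Int.fdiv_eq_ediv_of_nonneg _ hK.le, gridCover_eq_cellCover hk hG hs ht, cellCover,
    cellInterp_ediv hk
      (hG.mem_Icc_cellMin (.inl rfl) (.inl rfl) c) (hG.mem_Icc_cellMin (.inr rfl) (.inl rfl) c)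
      (hG.mem_Icc_cellMin (.inl rfl) (.inr rfl) c) (hG.mem_Icc_cellMin (.inr rfl) (.inr rfl) c),
    cell_ediv hs hk, cell_ediv ht hk]
  split_ifs <;> rfl

lemma gridCover_mem_Subdiv {Y : Set (Fin n → ℤ)} (hk : 0 ≤ k) (hG : GridContinuous G)
    (hY : ∀ i j, G i j ∈ Y) (x y : ℤ) : gridCover k G x y ∈ Subdiv Y (2 * k + 1) := by
  change rho (2 * k + 1) (gridCover k G x y) ∈ Y
  rw [rho_gridCover hk hG]
  exact hY _ _

lemma gridCover_eq_barPt (hk : 0 ≤ k) (hG : GridContinuous G) {q s : ℤ}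
    (hs : s ∈ Icc 0 (2 * k + 1)) {y₀ : Fin n → ℤ} (hq : ∀ j, G q j = y₀)
    (hq' : ∀ j, G (q + 1) j = y₀) (y : ℤ) :
    gridCover k G ((2 * k + 1) * q + k + s) y = barPt k y₀ := by
  obtain ⟨r, t, ht, rfl⟩ := exists_cell k (K := 2 * k + 1) (by omega) y
  rw [gridCover_eq_cellCover hk hG hs ht]
  funext c
  simp only [cellCover, cellInterp, hq, hq', latticeInterp_self, barPt]

end GridCover

section Paths

variable {n : ℕ} {k M : ℤ} {α β : ℤ → Fin n → ℤ} {Y : Set (Fin n → ℤ)} {y₀ : Fin n → ℤ}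

lemma cover_apply_projIcc (hk : 0 ≤ k) (hM : 0 ≤ M) (x : ℤ) (c : Fin n) :
    cover k M α x c = (2 * k + 1) * α (projIcc 0 M hM ((x - k) / (2 * k + 1))) c + k
      + ((x - k) % (2 * k + 1)) * (α (projIcc 0 M hM ((x - k) / (2 * k + 1) + 1)) c
        - α (projIcc 0 M hM ((x - k) / (2 * k + 1))) c) := by
  have hK : 0 < 2 * k + 1 := by omega
  have hlt : (x - k) / (2 * k + 1) < 0 ↔ x ≤ k - 1 := by
    rw [Int.ediv_lt_iff_lt_mul hK]; omega
  have hle : M ≤ (x - k) / (2 * k + 1) ↔ (2 * k + 1) * M + k ≤ x := by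
    rw [Int.le_ediv_iff_mul_le hK, mul_comm]; omega
  rw [cover, Int.fdiv_eq_ediv_of_nonneg _ hK.le]
  set q := (x - k) / (2 * k + 1)
  split_ifs with hx hx'
  · have hq := hlt.2 hx
    rw [projIcc_of_le_left hM hq.le, projIcc_of_le_left hM (Int.add_one_le_of_lt hq)]
    simp [barPt]
  · have hq := hle.2 hx'
    rw [projIcc_of_right_le hM hq, projIcc_of_right_le hM (by omega)]
    simp [barPt]
  · have hq : 0 ≤ q := not_lt.1 (hlt.not.2 hx)
    have hq' : q < M := not_le.1 (hle.not.2 hx')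
    rw [projIcc_of_mem hM ⟨hq, hq'.le⟩, projIcc_of_mem hM ⟨by omega, hq'⟩]
    rfl

lemma cover_zero (hk : 0 ≤ k) (hM : 0 ≤ M) : cover k M α 0 = barPt k (α 0) := by
  rcases hk.eq_or_lt with rfl | hk
  · rcases hM.eq_or_lt with rfl | hM
    · rw [cover, if_neg (by omega), if_pos (by omega)]
    · funext c
      rw [cover_apply_projIcc le_rfl hM.le]
      simp [barPt, projIcc_left]
  · rw [cover, if_pos (by omega)]

lemma cover_last (hk : 0 ≤ k) (hM : 0 ≤ M) :
    cover k M α ((2 * k + 1) * M + 2 * k) = barPt k (α M) := by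
  have : 0 ≤ (2 * k + 1) * M := by positivity
  rw [cover, if_neg (by omega), if_pos (by omega)]

lemma gridCover_eq_cover (hk : 0 ≤ k) (hM : 0 ≤ M) {G : ℤ → ℤ → Fin n → ℤ}
    (hG : GridContinuous G) {r t : ℤ} (ht : t ∈ Icc 0 (2 * k + 1))
    (hr : ∀ i, G i r = α (projIcc 0 M hM i)) (hr' : ∀ i, G i (r + 1) = α (projIcc 0 M hM i))
    (x : ℤ) : gridCover k G x ((2 * k + 1) * r + k + t) = cover k M α x := by
  have hK : 0 < 2 * k + 1 := by omega
  have hs : (x - k) % (2 * k + 1) ∈ Icc 0 (2 * k + 1) :=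
    ⟨Int.emod_nonneg _ hK.ne', (Int.emod_lt_of_pos _ hK).le⟩
  have hx : x = (2 * k + 1) * ((x - k) / (2 * k + 1)) + k + (x - k) % (2 * k + 1) := by
    linarith [Int.mul_ediv_add_emod (x - k) (2 * k + 1)]
  funext c
  have ha := hG.mem_Icc_cellMin (q := (x - k) / (2 * k + 1)) (.inl rfl) (.inl (Eq.refl r)) c
  have hb := hG.mem_Icc_cellMin (q := (x - k) / (2 * k + 1)) (.inr rfl) (.inl (Eq.refl r)) c
  rw [cover_apply_projIcc hk hM]
  nth_rw 1 [hx]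
  rw [gridCover_eq_cellCover hk hG hs ht, cellCover, hr', hr', ← hr, ← hr,
    cellInterp_same_rows ha hb hs]

lemma cover_mem_Subdiv (hk : 0 ≤ k) (hM : 0 ≤ M) (hmaps : ∀ i ∈ Icc (0 : ℤ) M, α i ∈ Y)
    (hcont : ∀ i ∈ Icc (0 : ℤ) M, ∀ i' ∈ Icc (0 : ℤ) M, |i - i'| ≤ 1 → adj (α i) (α i'))
    (x : ℤ) : cover k M α x ∈ Subdiv Y (2 * k + 1) := by
  have hG : GridContinuous fun i _ => α (projIcc 0 M hM i) := fun i i' _ _ hi _ =>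
    hcont _ (Subtype.prop _) _ (Subtype.prop _) ((abs_projIcc_sub_projIcc hM).trans hi)
  rw [← gridCover_eq_cover hk hM hG (r := 0) (t := 0) ⟨le_rfl, by omega⟩ (fun _ => rfl)
    (fun _ => rfl)]
  exact gridCover_mem_Subdiv hk hG (fun i _ => hmaps _ (Subtype.prop _)) _ _

lemma basedLoopHomotopic_cover (hk : 0 ≤ k) (hM : 0 ≤ M) (h : BasedLoopHomotopic M Y y₀ α β) :
    BasedLoopHomotopic ((2 * k + 1) * M + 2 * k) (Subdiv Y (2 * k + 1)) (barPt k y₀)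
      (cover k M α) (cover k M β) := by
  obtain ⟨N, hN, H, hmaps, hcont, hα, hβ, hleft, hright⟩ := h
  have hN₀ : 0 ≤ N := by omega
  let G : ℤ → ℤ → Fin n → ℤ := fun i j => H (projIcc 0 M hM i) (projIcc 0 N hN₀ j)
  have hG : GridContinuous G := fun i i' j j' hi hj =>
    hcont _ (Subtype.prop _) _ (Subtype.prop _) _ (Subtype.prop _) _ (Subtype.prop _)
      ((abs_projIcc_sub_projIcc hM).trans hi) ((abs_projIcc_sub_projIcc hN₀).trans hj)
  have hrow_start (j : ℤ) (hj : j ≤ 0) (i : ℤ) : G i j = α (projIcc 0 M hM i) := by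
    simp only [G, projIcc_of_le_left hN₀ hj, hα _ (Subtype.prop _)]
  have hrow_end (j : ℤ) (hj : N ≤ j) (i : ℤ) : G i j = β (projIcc 0 M hM i) := by
    simp only [G, projIcc_of_right_le hN₀ hj, hβ _ (Subtype.prop _)]
  have hcol_start (i : ℤ) (hi : i ≤ 0) (j : ℤ) : G i j = y₀ := by
    simp only [G, projIcc_of_le_left hM hi, hleft _ (Subtype.prop _)]
  have hcol_end (i : ℤ) (hi : M ≤ i) (j : ℤ) : G i j = y₀ := by
    simp only [G, projIcc_of_right_le hM hi, hright _ (Subtype.prop _)]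
  -- Both ends of `[0, (2k + 1)L + 2k]` lie half a cell beyond the outermost centres, in cells on
  -- which `G` is constant in the corresponding direction.
  have hzero : (0 : ℤ) = (2 * k + 1) * (-1) + k + (k + 1) := by ring
  have hlast (L : ℤ) : (2 * k + 1) * L + 2 * k = (2 * k + 1) * L + k + k := by ring
  have hk_mem : k ∈ Icc 0 (2 * k + 1) := ⟨hk, by omega⟩
  have hk_succ_mem : k + 1 ∈ Icc 0 (2 * k + 1) := ⟨by omega, by omega⟩
  refine ⟨(2 * k + 1) * N + 2 * k, by nlinarith, gridCover k G,
    fun x _ y _ => gridCover_mem_Subdiv hk hG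
      (fun _ _ => hmaps _ (Subtype.prop _) _ (Subtype.prop _)) x y,
    fun x _ y _ x' _ y' _ hx hy => gridContinuous_gridCover hk hG hx hy,
    fun x _ => ?_, fun x _ => ?_, fun y _ => ?_, fun y _ => ?_⟩
  · rw [hzero]
    exact gridCover_eq_cover hk hM hG hk_succ_mem (hrow_start _ (by omega)) (hrow_start _ le_rfl) x
  · rw [hlast]
    exact gridCover_eq_cover hk hM hG hk_mem (hrow_end _ le_rfl) (hrow_end _ (by omega)) x
  · rw [hzero]
    exact gridCover_eq_barPt hk hG hk_succ_mem (hcol_start _ (by omega)) (hcol_start _ le_rfl) y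
  · rw [hlast]
    exact gridCover_eq_barPt hk hG hk_mem (hcol_end _ le_rfl) (hcol_end _ (by omega)) y

end Paths

theorem covers_based_loop_homotopic_general {n : ℕ} (Y : Set (Fin n → ℤ))
    (M k : ℤ) (hM : 0 ≤ M) (hk : 0 ≤ k)
    (α β : ℤ → Fin n → ℤ) (y₀ : Fin n → ℤ)
    (hαmaps : ∀ i ∈ Icc (0 : ℤ) M, α i ∈ Y)
    (hαcont : ∀ i ∈ Icc (0 : ℤ) M, ∀ i' ∈ Icc (0 : ℤ) M, |i - i'| ≤ 1 → adj (α i) (α i'))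
    (hβmaps : ∀ i ∈ Icc (0 : ℤ) M, β i ∈ Y)
    (hβcont : ∀ i ∈ Icc (0 : ℤ) M, ∀ i' ∈ Icc (0 : ℤ) M, |i - i'| ≤ 1 → adj (β i) (β i'))
    (hα0 : α 0 = y₀) (hαM : α M = y₀) (hβ0 : β 0 = y₀) (hβM : β M = y₀) :
    (cover k M α 0 = barPt k y₀ ∧ cover k M α ((2 * k + 1) * M + 2 * k) = barPt k y₀) ∧
    (cover k M β 0 = barPt k y₀ ∧ cover k M β ((2 * k + 1) * M + 2 * k) = barPt k y₀) ∧
    (∀ j ∈ Icc (0 : ℤ) ((2 * k + 1) * M + 2 * k), cover k M α j ∈ Subdiv Y (2 * k + 1)) ∧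
    (∀ j ∈ Icc (0 : ℤ) ((2 * k + 1) * M + 2 * k), cover k M β j ∈ Subdiv Y (2 * k + 1)) ∧
    (BasedLoopHomotopic M Y y₀ α β →
      BasedLoopHomotopic ((2 * k + 1) * M + 2 * k) (Subdiv Y (2 * k + 1))
        (barPt k y₀) (cover k M α) (cover k M β)) :=
  ⟨⟨hα0 ▸ cover_zero hk hM, hαM ▸ cover_last hk hM⟩,
    ⟨hβ0 ▸ cover_zero hk hM, hβM ▸ cover_last hk hM⟩,
    fun j _ => cover_mem_Subdiv hk hM hαmaps hαcont j,
    fun j _ => cover_mem_Subdiv hk hM hβmaps hβcont j,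
    basedLoopHomotopic_cover hk hM⟩

/-- if `α, β : I_M → Y` are loops based at `y₀`, then their standard
covers are loops of length `L = (2k+1)M + 2k` in `S(Y,2k+1)` based at
`ȳ₀ = (2k+1)y₀ + (k,…,k)`, and if `α ≃ β` via a based homotopy of based loops, so are
`α̂` and `β̂`. -/
theorem covers_based_loop_homotopic {n : ℕ} (Y : Set (Fin n → ℤ)) (hY : Y.Finite)
    (M k : ℤ) (hM : 1 ≤ M) (hk : 1 ≤ k)
    (α β : ℤ → Fin n → ℤ) (y₀ : Fin n → ℤ)
    (hαmaps : ∀ i ∈ Icc (0 : ℤ) M, α i ∈ Y)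
    (hαcont : ∀ i ∈ Icc (0 : ℤ) M, ∀ i' ∈ Icc (0 : ℤ) M, |i - i'| ≤ 1 → adj (α i) (α i'))
    (hβmaps : ∀ i ∈ Icc (0 : ℤ) M, β i ∈ Y)
    (hβcont : ∀ i ∈ Icc (0 : ℤ) M, ∀ i' ∈ Icc (0 : ℤ) M, |i - i'| ≤ 1 → adj (β i) (β i'))
    (hα0 : α 0 = y₀) (hαM : α M = y₀) (hβ0 : β 0 = y₀) (hβM : β M = y₀) :
    (cover k M α 0 = barPt k y₀ ∧ cover k M α ((2 * k + 1) * M + 2 * k) = barPt k y₀) ∧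
    (cover k M β 0 = barPt k y₀ ∧ cover k M β ((2 * k + 1) * M + 2 * k) = barPt k y₀) ∧
    (∀ j ∈ Icc (0 : ℤ) ((2 * k + 1) * M + 2 * k), cover k M α j ∈ Subdiv Y (2 * k + 1)) ∧
    (∀ j ∈ Icc (0 : ℤ) ((2 * k + 1) * M + 2 * k), cover k M β j ∈ Subdiv Y (2 * k + 1)) ∧
    (BasedLoopHomotopic M Y y₀ α β →
      BasedLoopHomotopic ((2 * k + 1) * M + 2 * k) (Subdiv Y (2 * k + 1))
        (barPt k y₀) (cover k M α) (cover k M β)) := by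
  exact covers_based_loop_homotopic_general Y M k (by omega) (by omega) α β y₀ hαmaps hαcont
    hβmaps hβcont hα0 hαM hβ0 hβM
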